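/- Let f : ℝ → ℝ be defined by f(t) = exp(1 − 1/(1 − t²)) for |t| < 1 and f(t) = 0 for |t| ≥ 1. Then |deriv f t| ≤ 2.18 for every t ∈ ℝ. -/

import Mathlib

/-- The standard bump-type function `f(t) = exp(1 - 1/(1 - t²))` for `|t| < 1`,
and `f(t) = 0` for `|t| ≥ 1`. -/
noncomputable def bumpFn : ℝ → ℝ :=
  fun t => if |t| < 1 then Real.exp (1 - 1 / (1 - t ^ 2)) else 0

/-!
For `|t| < 1`, substituting `u = 1 / (1 - t²) ≥ 1` turns `f'(t)²` into
`4 u³ (u - 1) exp (-2 (u - 1))`, which is maximal at `u = (3 + √3) / 2`. Each polynomial factor lies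
below an exponential touching it at a chosen point: `x ≤ a exp (x / a - 1)`. We use `a = 12 / 5` for
the factors `u` and `b = 4 / 3` for `u - 1`: both are close to the values of these factors at the
maximizer, and `3 / a + 1 / b = 2`, so that the dependence on `u` cancels and a numerical inequality
remains. For `|t| ≥ 1` the point `t` is a global minimum of `f`.
-/

open Filter Topology

section ExponentialBounds

variable {a : ℝ}

lemma le_mul_exp_div_sub_one (ha : 0 < a) (x : ℝ) : x ≤ a * Real.exp (x / a - 1) :=
  calc x = a * (x / a - 1 + 1) := by field_simp; ring
    _ ≤ a * Real.exp (x / a - 1) := by gcongr; exact Real.add_one_le_exp _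

lemma pow_le_pow_mul_exp {x : ℝ} (n : ℕ) (ha : 0 < a) (hx : 0 ≤ x) :
    x ^ n ≤ a ^ n * Real.exp (n * (x / a - 1)) :=
  calc x ^ n ≤ (a * Real.exp (x / a - 1)) ^ n := by
        gcongr; exact le_mul_exp_div_sub_one ha x
    _ = a ^ n * Real.exp (n * (x / a - 1)) := by rw [mul_pow, ← Real.exp_nat_mul]

lemma le_exp_eleven_div_four : (15.6 : ℝ) ≤ Real.exp (11 / 4) := by
  refine le_of_pow_le_pow_left₀ four_ne_zero (Real.exp_pos _).le ?_
  calc (15.6 : ℝ) ^ 4 ≤ 2.7182818283 ^ 11 := by norm_num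
    _ ≤ Real.exp 1 ^ 11 := by gcongr; exact Real.exp_one_gt_d9.le
    _ = Real.exp (11 / 4) ^ 4 := by
        rw [← Real.exp_nat_mul, ← Real.exp_nat_mul]; norm_num

lemma pow_three_mul_sub_one_le_mul_exp {u : ℝ} (hu : 1 ≤ u) :
    u ^ 3 * (u - 1) ≤ 1.09 ^ 2 * Real.exp (2 * (u - 1)) := by
  have cube_le : u ^ 3 ≤ (12 / 5) ^ 3 * Real.exp (3 * (u / (12 / 5) - 1)) :=
    mod_cast pow_le_pow_mul_exp 3 (by norm_num : (0 : ℝ) < 12 / 5) (by linarith)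
  have sub_one_le : u - 1 ≤ 4 / 3 * Real.exp ((u - 1) / (4 / 3) - 1) :=
    le_mul_exp_div_sub_one (by norm_num) _
  have exponents : 3 * (u / (12 / 5) - 1) + ((u - 1) / (4 / 3) - 1) + 11 / 4 = 2 * (u - 1) := by
    ring
  calc u ^ 3 * (u - 1)
      ≤ ((12 / 5) ^ 3 * Real.exp (3 * (u / (12 / 5) - 1))) *
          (4 / 3 * Real.exp ((u - 1) / (4 / 3) - 1)) := by
        gcongr
    _ = (12 / 5) ^ 3 * (4 / 3) *
          Real.exp (3 * (u / (12 / 5) - 1) + ((u - 1) / (4 / 3) - 1)) := by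
        rw [Real.exp_add]; ring
    _ ≤ 1.09 ^ 2 * Real.exp (11 / 4) *
          Real.exp (3 * (u / (12 / 5) - 1) + ((u - 1) / (4 / 3) - 1)) := by
        gcongr ?_ * _; linarith [le_exp_eleven_div_four]
    _ = 1.09 ^ 2 * Real.exp (2 * (u - 1)) := by
        rw [← exponents, Real.exp_add _ (11 / 4)]; ring

end ExponentialBounds

section BumpFn

variable {t : ℝ}

lemma one_sub_sq_pos_of_abs_lt_one (ht : |t| < 1) : 0 < 1 - t ^ 2 :=
  sub_pos.2 ((sq_lt_one_iff_abs_lt_one t).2 ht)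

lemma bumpFn_of_abs_lt_one (ht : |t| < 1) : bumpFn t = Real.exp (1 - (1 - t ^ 2)⁻¹) := by
  simp [bumpFn, ht]

lemma bumpFn_of_one_le_abs (ht : 1 ≤ |t|) : bumpFn t = 0 :=
  if_neg ht.not_gt

lemma bumpFn_nonneg (t : ℝ) : 0 ≤ bumpFn t := by
  unfold bumpFn; positivity

lemma hasDerivAt_bumpFn_of_abs_lt_one (ht : |t| < 1) :
    HasDerivAt bumpFn (-(2 * t) * (1 - t ^ 2)⁻¹ ^ 2 * bumpFn t) t := by
  have one_sub_sq_ne_zero : 1 - t ^ 2 ≠ 0 := (one_sub_sq_pos_of_abs_lt_one ht).ne'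
  have eventually_eq : bumpFn =ᶠ[𝓝 t] fun s ↦ Real.exp (1 - (1 - s ^ 2)⁻¹) :=
    (continuous_abs.continuousAt.eventually_lt_const ht).mono fun _ ↦ bumpFn_of_abs_lt_one
  have hasDerivAt_exp :=
    ((((hasDerivAt_pow 2 t).const_sub 1).fun_inv one_sub_sq_ne_zero).const_sub 1).exp
  refine (hasDerivAt_exp.congr_of_eventuallyEq eventually_eq).congr_deriv ?_
  rw [bumpFn_of_abs_lt_one ht]
  push_cast
  field_simp

lemma sq_deriv_bumpFn_of_abs_lt_one (ht : |t| < 1) :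
    deriv bumpFn t ^ 2 = 4 * ((1 - t ^ 2)⁻¹ ^ 3 * ((1 - t ^ 2)⁻¹ - 1)) *
      Real.exp (-(2 * ((1 - t ^ 2)⁻¹ - 1))) := by
  have one_sub_sq_ne_zero : 1 - t ^ 2 ≠ 0 := (one_sub_sq_pos_of_abs_lt_one ht).ne'
  have inv_sub_one : (1 - t ^ 2)⁻¹ - 1 = (1 - t ^ 2)⁻¹ * t ^ 2 := by
    field_simp; ring
  have sq_bumpFn : bumpFn t ^ 2 = Real.exp (-(2 * ((1 - t ^ 2)⁻¹ - 1))) := by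
    rw [bumpFn_of_abs_lt_one ht, ← Real.exp_nat_mul]
    congr 1; push_cast; ring
  rw [(hasDerivAt_bumpFn_of_abs_lt_one ht).deriv, ← sq_bumpFn, inv_sub_one]
  ring

lemma deriv_bumpFn_of_one_le_abs (ht : 1 ≤ |t|) : deriv bumpFn t = 0 := by
  have isLocalMin : IsLocalMin bumpFn t := Eventually.of_forall fun s ↦
    (bumpFn_of_one_le_abs ht).trans_le (bumpFn_nonneg s)
  exact isLocalMin.deriv_eq_zero

end BumpFn

/-- The global gradient bound `|f'(t)| ≤ 2.18` for every `t`. -/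
theorem bumpFn_deriv_bound (t : ℝ) : |deriv bumpFn t| ≤ 2.18 := by
  rcases lt_or_ge |t| 1 with ht | ht
  · have one_le_inv : 1 ≤ (1 - t ^ 2)⁻¹ :=
      (one_le_inv₀ (one_sub_sq_pos_of_abs_lt_one ht)).2 (sub_le_self 1 (sq_nonneg t))
    refine abs_le_of_sq_le_sq ?_ (by norm_num)
    rw [sq_deriv_bumpFn_of_abs_lt_one ht]
    set u := (1 - t ^ 2)⁻¹
    calc 4 * (u ^ 3 * (u - 1)) * Real.exp (-(2 * (u - 1)))
        ≤ 4 * (1.09 ^ 2 * Real.exp (2 * (u - 1))) * Real.exp (-(2 * (u - 1))) := by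
          gcongr 4 * ?_ * _
          exact pow_three_mul_sub_one_le_mul_exp one_le_inv
      _ = 2.18 ^ 2 := by
          rw [Real.exp_neg]; field_simp; norm_num
  · rw [deriv_bumpFn_of_one_le_abs ht]
    norm_num
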